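/- arXiv:2505.22478 — 2 statements merged into one kernel-verified Lean document; each statement's English description precedes it below -/
import Mathlib

section
/- Brascamp–Lieb moment comparison (Lemma 3.5, estimate (3.1)). Let n ≥ 1, let V : ℝⁿ → ℝ be an even, convex function, and let A ∈ ℝ^{n×n} be a symmetric positive definite matrix. Define the probability measures μ and 𝒢 on ℝⁿ by dμ(φ) = Z₁^{-1} exp( -⟨φ, Aφ⟩ - V(φ) ) dφ and d𝒢(φ) = Z₂^{-1} exp( -⟨φ, Aφ⟩ ) dφ, where dφ is Lebesgue measure on ℝⁿ and Z₁, Z₂ are the normalization constants making μ and 𝒢 probability measures (these are finite and positive since an even convex V is bounded below by V(0)). Then for every linear function f : ℝⁿ → ℝ and every q ≥ 1: ∫ |f(φ)|^q dμ(φ) ≤ ∫ |f(φ)|^q d𝒢(φ). -/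
open MeasureTheory Real Matrix

noncomputable section

open scoped Pointwise in
/-- One-dimensional Brunn–Minkowski inequality for compact sets. -/
theorem volume_combo_le {K L S : Set ℝ} (hK : IsCompact K) (hL : IsCompact L)
    (hK0 : K.Nonempty) (hL0 : L.Nonempty) {a b : ℝ} (ha : 0 ≤ a) (hb : 0 ≤ b)
    (h : ∀ x ∈ K, ∀ y ∈ L, a * x + b * y ∈ S) :
    ENNReal.ofReal a * volume K + ENNReal.ofReal b * volume L ≤ volume S := by
  obtain ⟨p, hpK, hp⟩ := hK.exists_isGreatest hK0
  obtain ⟨r, hrL, hr⟩ := hL.exists_isLeast hL0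
  have hKim : volume ((fun x ↦ x + b * r) '' (a • K)) = ENNReal.ofReal a * volume K := by
    rw [Set.image_add_right, measure_preimage_add_right,
      Measure.addHaar_smul_of_nonneg _ ha]; simp
  have hLim : volume ((fun x ↦ a * p + x) '' (b • L)) = ENNReal.ofReal b * volume L := by
    rw [Set.image_add_left, measure_preimage_add,
      Measure.addHaar_smul_of_nonneg _ hb]; simp
  rw [← hKim, ← hLim, ← measure_union₀]
  · refine measure_mono (Set.union_subset ?_ ?_)
    · rintro _ ⟨_, ⟨x, hx, rfl⟩, rfl⟩
      exact h x hx r hrL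
    · rintro _ ⟨_, ⟨y, hy, rfl⟩, rfl⟩
      exact h p hpK y hy
  · exact (((hL.smul b).image (continuous_const_add (a * p))).measurableSet).nullMeasurableSet
  · refine measure_mono_null (t := {a * p + b * r}) ?_ (by simp)
    rintro _ ⟨⟨_, ⟨x, hx, rfl⟩, rfl⟩, ⟨_, ⟨y, hy, rfl⟩, hxy⟩⟩
    have h1 := mul_le_mul_of_nonneg_left (hp hx) ha
    have h2 := mul_le_mul_of_nonneg_left (hr hy) hb
    simp only [smul_eq_mul] at hxy ⊢
    rw [Set.mem_singleton_iff]
    linarith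

/-- One-dimensional Prékopa–Leindler inequality in arithmetic form, for potentials with
minimal value `0`. -/
theorem combo_integral_exp_neg_le {U V W : ℝ → ℝ} (hU : Continuous U) (hV : Continuous V)
    (hUt : Filter.Tendsto U (Filter.cocompact ℝ) Filter.atTop)
    (hVt : Filter.Tendsto V (Filter.cocompact ℝ) Filter.atTop)
    (hUi : Integrable fun x ↦ exp (-U x)) (hVi : Integrable fun x ↦ exp (-V x))
    (hWi : Integrable fun x ↦ exp (-W x))
    (hU0 : ∀ x, 0 ≤ U x) (hV0 : ∀ x, 0 ≤ V x) {p r : ℝ} (hp : U p = 0) (hr : V r = 0)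
    {a b : ℝ} (ha : 0 ≤ a) (hb : 0 ≤ b) (hab : a + b = 1)
    (h : ∀ x y, W (a * x + b * y) ≤ a * U x + b * V y) :
    a * (∫ x, exp (-U x)) + b * (∫ x, exp (-V x)) ≤ ∫ x, exp (-W x) := by
  have key : ∀ F : ℝ → ℝ, (Integrable fun x ↦ exp (-F x)) →
      ENNReal.ofReal (∫ x, exp (-F x)) = ∫⁻ t in Set.Ioi 0, volume {x | t ≤ exp (-F x)} := by
    intro F hF
    rw [ofReal_integral_eq_lintegral_ofReal hF (.of_forall fun _ ↦ (exp_pos _).le)]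
    exact lintegral_eq_lintegral_meas_le _ (.of_forall fun _ ↦ (exp_pos _).le) hF.1.aemeasurable
  have hmeas : ∀ F : ℝ → ℝ, Measurable fun t ↦ volume {x | t ≤ exp (-F x)} := by
    intro F
    refine Antitone.measurable fun s t hst ↦ measure_mono fun x hx ↦ ?_
    exact le_trans hst hx
  have hcpt : ∀ F : ℝ → ℝ, Continuous F → Filter.Tendsto F (Filter.cocompact ℝ) Filter.atTop →
      ∀ t, 0 < t → IsCompact {x | t ≤ exp (-F x)} := by
    intro F hF hFt t ht
    have hc : IsClosed {x | t ≤ exp (-F x)} := isClosed_le (by fun_prop) (by fun_prop)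
    have := hFt.eventually (Filter.eventually_gt_atTop (-log t))
    rw [Filter.Eventually, Filter.mem_cocompact] at this
    obtain ⟨K, hK, hKs⟩ := this
    refine hK.of_isClosed_subset hc fun x hx ↦ ?_
    by_contra hxK
    have h1 : -log t < F x := hKs hxK
    have h2 : log t ≤ -F x := (log_le_iff_le_exp ht).2 hx
    linarith
  have hnn : ∀ F : ℝ → ℝ, 0 ≤ ∫ x, exp (-F x) :=
    fun F ↦ integral_nonneg fun _ ↦ (exp_pos _).le
  rw [← ENNReal.ofReal_le_ofReal_iff (hnn W), ENNReal.ofReal_add (mul_nonneg ha (hnn U))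
    (mul_nonneg hb (hnn V)), ENNReal.ofReal_mul ha, ENNReal.ofReal_mul hb, key U hUi, key V hVi,
    key W hWi, ← lintegral_const_mul _ (hmeas U), ← lintegral_const_mul _ (hmeas V),
    ← lintegral_add_left ((hmeas U).const_mul _)]
  refine setLIntegral_mono (hmeas W) fun t ht ↦ ?_
  rcases le_or_gt t 1 with h1 | h1
  · refine volume_combo_le (hcpt U hU hUt t ht) (hcpt V hV hVt t ht) ⟨p, by simpa [hp]⟩
      ⟨r, by simpa [hr]⟩ ha hb fun x hx y hy ↦ ?_
    have hx' := (log_le_iff_le_exp ht).2 hx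
    have hy' := (log_le_iff_le_exp ht).2 hy
    refine (log_le_iff_le_exp ht).1 ?_
    have e1 := mul_le_mul_of_nonneg_left hx' ha
    have e2 := mul_le_mul_of_nonneg_left hy' hb
    have e3 : a * log t + b * log t = log t := by rw [← add_mul, hab, one_mul]
    linarith [h x y]
  · have hempty : ∀ F : ℝ → ℝ, (∀ x, 0 ≤ F x) → {x | t ≤ exp (-F x)} = ∅ := by
      intro F hF
      ext x
      simp only [Set.mem_ofPred_eq, Set.mem_empty_iff_false, iff_false, not_le]
      exact lt_of_le_of_lt (exp_le_one_iff.2 (by linarith [hF x])) h1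
    simp [hempty U hU0, hempty V hV0]

/-- One-dimensional Prékopa–Leindler inequality, in logarithmic form. -/
theorem neg_log_integral_exp_neg_le {U V W : ℝ → ℝ} (hU : Continuous U) (hV : Continuous V)
    (hUt : Filter.Tendsto U (Filter.cocompact ℝ) Filter.atTop)
    (hVt : Filter.Tendsto V (Filter.cocompact ℝ) Filter.atTop)
    (hUi : Integrable fun x ↦ exp (-U x)) (hVi : Integrable fun x ↦ exp (-V x))
    (hWi : Integrable fun x ↦ exp (-W x))
    {a b : ℝ} (ha : 0 ≤ a) (hb : 0 ≤ b) (hab : a + b = 1)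
    (h : ∀ x y, W (a * x + b * y) ≤ a * U x + b * V y) :
    -log (∫ x, exp (-W x)) ≤ a * -log (∫ x, exp (-U x)) + b * -log (∫ x, exp (-V x)) := by
  obtain ⟨p, hp⟩ := hU.exists_forall_le hUt
  obtain ⟨r, hr⟩ := hV.exists_forall_le hVt
  have hshift : ∀ (F : ℝ → ℝ) (m : ℝ), (fun x ↦ exp (-(F x - m))) = fun x ↦ exp m * exp (-F x) :=
    fun F m ↦ by ext x; rw [← exp_add]; ring_nf
  have hint : ∀ (F : ℝ → ℝ) (m : ℝ), (Integrable fun x ↦ exp (-F x)) →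
      Integrable fun x ↦ exp (-(F x - m)) := fun F m hF ↦ by
    rw [hshift]; exact hF.const_mul _
  have hlog : ∀ (F : ℝ → ℝ) (m : ℝ), (Integrable fun x ↦ exp (-F x)) →
      log (∫ x, exp (-(F x - m))) = m + log (∫ x, exp (-F x)) := fun F m hF ↦ by
    rw [hshift, integral_const_mul, log_mul (exp_pos _).ne' (integral_exp_pos hF).ne', log_exp]
  have main := combo_integral_exp_neg_le (U := fun x ↦ U x - U p) (V := fun x ↦ V x - V r)
    (W := fun x ↦ W x - (a * U p + b * V r)) (by fun_prop) (by fun_prop)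
    (Filter.tendsto_atTop_add_const_right _ _ hUt) (Filter.tendsto_atTop_add_const_right _ _ hVt)
    (hint _ _ hUi) (hint _ _ hVi) (hint _ _ hWi) (fun x ↦ sub_nonneg.2 (hp x))
    (fun x ↦ sub_nonneg.2 (hr x)) (sub_self _) (sub_self _) ha hb hab
    (fun x y ↦ by linarith [h x y])
  have hUpos := integral_exp_pos (hint U (U p) hUi)
  have hVpos := integral_exp_pos (hint V (V r) hVi)
  have hconc := strictConcaveOn_log_Ioi.concaveOn.2 hUpos hVpos ha hb hab
  have hmono := log_le_log (by
    have := (convex_Ioi (0 : ℝ)) hUpos hVpos ha hb hab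
    simpa using this) main
  simp only [smul_eq_mul] at hconc
  rw [hlog _ _ hUi, hlog _ _ hVi] at hconc
  rw [hlog _ _ hWi] at hmono
  linarith

theorem integrable_exp_neg_of_sq_le {k : ℕ} {U : (Fin k → ℝ) → ℝ} (hU : Continuous U)
    {c C : ℝ} (hc : 0 < c) (h : ∀ z, c * ∑ i, z i ^ 2 - C ≤ U z) :
    Integrable fun z ↦ exp (-U z) := by
  have hg : Integrable fun z : Fin k → ℝ ↦ ∏ i, exp (-c * z i ^ 2) :=
    Integrable.fintype_prod fun _ ↦ integrable_exp_neg_mul_sq hc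
  refine (hg.const_mul (exp C)).mono' (by fun_prop) (.of_forall fun z ↦ ?_)
  rw [norm_of_nonneg (exp_pos _).le, ← exp_sum, ← exp_add, exp_le_exp, ← Finset.mul_sum]
  linarith [h z]

theorem integrable_exp_neg_of_sq_le_real {U : ℝ → ℝ} (hU : Continuous U)
    {c C : ℝ} (hc : 0 < c) (h : ∀ y, c * y ^ 2 - C ≤ U y) :
    Integrable fun y ↦ exp (-U y) := by
  refine ((integrable_exp_neg_mul_sq hc).const_mul (exp C)).mono' (by fun_prop)
    (.of_forall fun z ↦ ?_)
  rw [norm_of_nonneg (exp_pos _).le, ← exp_add, exp_le_exp]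
  linarith [h z]

theorem ConvexOn.continuous_of_univ {E : Type*} [NormedAddCommGroup E] [NormedSpace ℝ E]
    [FiniteDimensional ℝ E] {W : E → ℝ} (hW : ConvexOn ℝ Set.univ W) : Continuous W :=
  hW.locallyLipschitz.continuous

/-- The slice of a convex function on a product is convex. -/
theorem ConvexOn.slice {E F : Type*} [AddCommGroup E] [Module ℝ E] [AddCommGroup F] [Module ℝ F]
    {W : E × F → ℝ} (hW : ConvexOn ℝ Set.univ W) (x : E) :
    ConvexOn ℝ Set.univ fun y ↦ W (x, y) := by
  refine ⟨convex_univ, fun y _ z _ a b ha hb hab ↦ ?_⟩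
  have := hW.2 (Set.mem_univ (x, y)) (Set.mem_univ (x, z)) ha hb hab
  simpa [← add_smul, hab] using this

/-- **Prékopa's theorem** for integration over one real variable. -/
theorem ConvexOn.neg_log_integral_exp_neg_real {E : Type*} [AddCommGroup E] [Module ℝ E]
    {W : E × ℝ → ℝ} (hW : ConvexOn ℝ Set.univ W) {c : ℝ} (hc : 0 < c)
    (h : ∀ x, ∃ C, ∀ y, c * y ^ 2 - C ≤ W (x, y)) :
    ConvexOn ℝ Set.univ fun x ↦ -log (∫ y, exp (-W (x, y))) := by
  have hcont : ∀ x, Continuous fun y ↦ W (x, y) := fun x ↦ (hW.slice x).continuous_of_univ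
  have hint : ∀ x, Integrable fun y ↦ exp (-W (x, y)) := fun x ↦
    let ⟨_, hC⟩ := h x; integrable_exp_neg_of_sq_le_real (hcont x) hc hC
  have ht : ∀ x, Filter.Tendsto (fun y ↦ W (x, y)) (Filter.cocompact ℝ) Filter.atTop := by
    intro x
    obtain ⟨C, hC⟩ := h x
    refine Filter.tendsto_atTop_mono hC (Filter.tendsto_atTop_add_const_right _ _ ?_)
    refine Filter.Tendsto.const_mul_atTop hc ?_
    have := (Filter.tendsto_pow_atTop (α := ℝ) two_ne_zero).comp
      (tendsto_norm_cocompact_atTop (E := ℝ))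
    simpa [Function.comp_def] using this
  refine ⟨convex_univ, fun x _ y _ a b ha hb hab ↦ ?_⟩
  refine neg_log_integral_exp_neg_le (hcont x) (hcont y) (ht x) (ht y) (hint x) (hint y)
    (hint _) ha hb hab fun s t ↦ ?_
  exact hW.2 (Set.mem_univ (x, s)) (Set.mem_univ (y, t)) ha hb hab

theorem integral_fin_succ_eq {k : ℕ} {g : (Fin (k + 1) → ℝ) → ℝ} (hg : Integrable g) :
    ∫ z, g z = ∫ z : Fin k → ℝ, ∫ y : ℝ, g (Fin.cons y z) := by
  have hmp := (volume_preserving_piFinSuccAbove (fun _ : Fin (k + 1) ↦ ℝ) 0).symm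
  have hi : Integrable (fun p : ℝ × (Fin k → ℝ) ↦ g (Fin.cons p.1 p.2))
      (volume.prod volume) := by
    have := (hmp.integrable_comp_emb (MeasurableEquiv.measurableEmbedding _) (g := g)).2 hg
    simpa [Function.comp_def, MeasurableEquiv.piFinSuccAbove, Fin.consEquiv,
      Measure.volume_eq_prod] using this
  rw [← integral_prod_symm _ hi, ← hmp.integral_comp']
  simp [MeasurableEquiv.piFinSuccAbove, Fin.consEquiv, Measure.volume_eq_prod]

/-- **Prékopa's theorem**: integrating out finitely many real variables preserves log-concavity. -/
theorem ConvexOn.neg_log_integral_exp_neg {k : ℕ} {W : ℝ × (Fin k → ℝ) → ℝ}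
    (hW : ConvexOn ℝ Set.univ W) {c C : ℝ} (hc : 0 < c)
    (h : ∀ x z, c * ∑ i, z i ^ 2 - C ≤ W (x, z)) :
    ConvexOn ℝ Set.univ fun x ↦ -log (∫ z, exp (-W (x, z))) := by
  induction k generalizing C with
  | zero =>
    have : (fun x ↦ -log (∫ z, exp (-W (x, z)))) = fun x ↦ W (x, 0) := by
      ext x
      rw [volume_pi, Measure.pi_of_empty _ 0, integral_dirac, log_exp, neg_neg]
    rw [this]
    exact hW.comp_linearMap (LinearMap.inl ℝ ℝ (Fin 0 → ℝ))
  | succ k ih =>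
    let L : ((ℝ × (Fin k → ℝ)) × ℝ) →ₗ[ℝ] ℝ × (Fin (k + 1) → ℝ) :=
      { toFun := fun p ↦ (p.1.1, Fin.cons p.2 p.1.2)
        map_add' := fun p r ↦ by
          ext i
          · rfl
          · refine Fin.cases ?_ (fun j ↦ ?_) i <;> simp
        map_smul' := fun a p ↦ by
          ext i
          · rfl
          · refine Fin.cases ?_ (fun j ↦ ?_) i <;> simp }
    have hWL : ConvexOn ℝ Set.univ fun p ↦ W (L p) := hW.comp_linearMap L
    have hlow : ∀ p y, c * y ^ 2 - (C - c * ∑ i, p.2 i ^ 2) ≤ W (L (p, y)) := by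
      intro p y
      have := h p.1 (Fin.cons y p.2)
      rw [Fin.sum_univ_succ] at this
      simp only [Fin.cons_zero, Fin.cons_succ] at this
      change _ ≤ W (p.1, Fin.cons y p.2)
      linarith
    have hint : ∀ p, Integrable fun y ↦ exp (-W (L (p, y))) := fun p ↦
      integrable_exp_neg_of_sq_le_real (hWL.slice p).continuous_of_univ hc (hlow p)
    have hpos := fun p ↦ integral_exp_pos (hint p)
    have hmarg := hWL.neg_log_integral_exp_neg_real hc fun p ↦ ⟨_, hlow p⟩
    have hstep := ih hmarg (C := C + log √(π / c)) fun x z ↦ by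
      have hle : ∫ y, exp (-W (L ((x, z), y))) ≤ exp (C - c * ∑ i, z i ^ 2) * √(π / c) := by
        rw [← integral_gaussian, ← integral_const_mul]
        refine integral_mono (hint _) ((integrable_exp_neg_mul_sq hc).const_mul _) fun y ↦ ?_
        dsimp only
        rw [← exp_add, exp_le_exp]
        linarith [hlow (x, z) y]
      have := log_le_log (hpos (x, z)) hle
      rw [log_mul (exp_pos _).ne' (by positivity), log_exp] at this
      linarith
    convert hstep using 4 with x
    rw [integral_fin_succ_eq
      (integrable_exp_neg_of_sq_le (hW.slice x).continuous_of_univ hc (h x))]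
    refine integral_congr_ae (.of_forall fun z ↦ ?_)
    dsimp only
    rw [neg_neg, exp_log (hpos (x, z))]
    rfl

theorem ConvexOn.le_of_abs_le_of_even {φ : ℝ → ℝ} (hφ : ConvexOn ℝ Set.univ φ)
    (heven : ∀ t, φ (-t) = φ t) {s t : ℝ} (hst : |s| ≤ |t|) : φ s ≤ φ t := by
  have habs : φ |t| = φ t := by
    rcases abs_choice t with h | h <;> rw [h]
    exact heven t
  have hmem : s ∈ segment ℝ (-|t|) |t| := by
    rw [segment_eq_Icc (by linarith [abs_nonneg t])]
    exact abs_le.1 hst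
  have := hφ.le_on_segment (Set.mem_univ _) (Set.mem_univ _) hmem
  rwa [heven, max_self, habs] at this

/-- Chebyshev-type correlation inequality between `|t| ^ q` and a function that is nonincreasing
in `|t|`. -/
theorem integral_rpow_abs_mul_le {g H : ℝ → ℝ} {q : ℝ} (hq : 0 < q) (hg0 : ∀ t, 0 ≤ g t)
    (hH : ∀ s t, |s| ≤ |t| → H t ≤ H s) (hg : Integrable g) (hgpos : 0 < ∫ t, g t)
    (hqg : Integrable fun t ↦ |t| ^ q * g t) (hgH : Integrable fun t ↦ g t * H t)
    (hqgH : Integrable fun t ↦ |t| ^ q * (g t * H t)) :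
    (∫ t, |t| ^ q * (g t * H t)) * ∫ t, g t ≤ (∫ t, |t| ^ q * g t) * ∫ t, g t * H t := by
  set M := (∫ t, |t| ^ q * g t) / ∫ t, g t with hM
  have hM0 : 0 ≤ M := div_nonneg
    (integral_nonneg fun t ↦ mul_nonneg (rpow_nonneg (abs_nonneg _) _) (hg0 t)) hgpos.le
  have hMg : ∫ t, |t| ^ q * g t = M * ∫ t, g t := (div_mul_cancel₀ _ hgpos.ne').symm
  set r := M ^ q⁻¹ with hr
  have hr0 : 0 ≤ r := rpow_nonneg hM0 _
  have hrq : r ^ q = M := rpow_inv_rpow hM0 hq.ne'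
  have hpt : ∀ t, |t| ^ q * (g t * H t) - M * (g t * H t)
      - H r * (|t| ^ q * g t - M * g t) ≤ 0 := by
    intro t
    have : (|t| ^ q - M) * (H t - H r) ≤ 0 := by
      rcases le_total |t| r with h | h
      · refine mul_nonpos_of_nonpos_of_nonneg ?_ ?_
        · rw [← hrq]
          exact sub_nonpos.2 (rpow_le_rpow (abs_nonneg _) h hq.le)
        · exact sub_nonneg.2 (hH t r (by rwa [abs_of_nonneg hr0]))
      · refine mul_nonpos_of_nonneg_of_nonpos ?_ ?_
        · rw [← hrq]
          exact sub_nonneg.2 (rpow_le_rpow hr0 h hq.le)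
        · exact sub_nonpos.2 (hH r t (by rwa [abs_of_nonneg hr0]))
    nlinarith [mul_nonpos_of_nonneg_of_nonpos (hg0 t) this]
  have hint := integral_nonpos (μ := volume) hpt
  have hi₁ : Integrable fun t ↦ |t| ^ q * (g t * H t) - M * (g t * H t) :=
    hqgH.sub (hgH.const_mul M)
  have hi₂ : Integrable fun t ↦ H r * (|t| ^ q * g t - M * g t) :=
    (hqg.sub (hg.const_mul M)).const_mul _
  rw [integral_sub hi₁ hi₂,
    integral_sub hqgH (hgH.const_mul M), integral_const_mul, integral_const_mul,
    integral_sub hqg (hg.const_mul M), integral_const_mul, hMg] at hint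
  rw [hMg]
  nlinarith

theorem integrable_rpow_abs_mul_exp_neg_mul_sq {α q : ℝ} (hα : 0 < α) (hq : 0 ≤ q) :
    Integrable fun t : ℝ ↦ |t| ^ q * exp (-α * t ^ 2) := by
  have h := integrable_rpow_mul_exp_neg_mul_sq hα (s := q) (by linarith)
  refine (h.norm.add h.comp_neg.norm).mono' (Measurable.aestronglyMeasurable (by fun_prop))
    (.of_forall fun t ↦ ?_)
  rw [norm_of_nonneg (by positivity)]
  rcases abs_cases t with ⟨ht, -⟩ | ⟨ht, -⟩ <;> rw [ht]
  · exact (le_abs_self _).trans (le_add_of_nonneg_right (norm_nonneg _))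
  · simp only [Pi.add_apply, neg_sq]
    exact (le_abs_self _).trans (le_add_of_nonneg_left (norm_nonneg _))

/-- Moment comparison on a product, where the Gaussian weight splits and the linear functional
is the first coordinate. -/
theorem moment_comparison_prod {m : ℕ} {α c q : ℝ} (hα : 0 < α) (hc : 0 < c) (hq : 0 < q)
    {Q : (Fin m → ℝ) → ℝ} (hQ : ConvexOn ℝ Set.univ Q) (hQeven : ∀ z, Q (-z) = Q z)
    (hQc : ∀ z, c * ∑ i, z i ^ 2 ≤ Q z)
    {V : ℝ × (Fin m → ℝ) → ℝ} (hV : ConvexOn ℝ Set.univ V) (hVeven : ∀ p, V (-p) = V p) :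
    (∫ p : ℝ × (Fin m → ℝ), |p.1| ^ q * exp (-(α * p.1 ^ 2 + Q p.2) - V p)) /
        (∫ p : ℝ × (Fin m → ℝ), exp (-(α * p.1 ^ 2 + Q p.2) - V p)) ≤
      (∫ p : ℝ × (Fin m → ℝ), |p.1| ^ q * exp (-(α * p.1 ^ 2 + Q p.2))) /
        (∫ p : ℝ × (Fin m → ℝ), exp (-(α * p.1 ^ 2 + Q p.2))) := by
  have hVlow : ∀ p, V 0 ≤ V p := fun p ↦ by
    have := hV.2 (Set.mem_univ p) (Set.mem_univ (-p))
      (one_half_pos.le : (0 : ℝ) ≤ 1 / 2) one_half_pos.le (add_halves 1)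
    simp only [smul_neg, add_neg_cancel, hVeven, smul_eq_mul] at this
    linarith
  let W : ℝ × (Fin m → ℝ) → ℝ := fun p ↦ Q p.2 + V p
  have hW : ConvexOn ℝ Set.univ W := (hQ.comp_linearMap (LinearMap.snd ℝ ℝ (Fin m → ℝ))).add hV
  have hWlow : ∀ x z, c * ∑ i, z i ^ 2 - (-V 0) ≤ W (x, z) := fun x z ↦ by
    linarith [hQc z, hVlow (x, z)]
  have hQcont := hQ.continuous_of_univ
  have hVcont := hV.continuous_of_univ
  have hQi : Integrable fun z ↦ exp (-Q z) :=
    integrable_exp_neg_of_sq_le hQcont hc (C := 0) (by simpa using hQc)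
  have hWi : ∀ t, Integrable fun z ↦ exp (-W (t, z)) := fun t ↦
    integrable_exp_neg_of_sq_le (hW.slice t).continuous_of_univ hc (hWlow t)
  set g : ℝ → ℝ := fun t ↦ exp (-α * t ^ 2) with hgdef
  have hg : Integrable g := integrable_exp_neg_mul_sq hα
  have hqg : Integrable fun t ↦ |t| ^ q * g t := integrable_rpow_abs_mul_exp_neg_mul_sq hα hq.le
  have hgpos : 0 < ∫ t, g t := integral_exp_pos hg
  set H : ℝ → ℝ := fun t ↦ ∫ z, exp (-W (t, z)) with hHdef
  have hHpos : ∀ t, 0 < H t := fun t ↦ integral_exp_pos (hWi t)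
  have hHeven : ∀ t, H (-t) = H t := fun t ↦ by
    rw [hHdef]
    dsimp only
    rw [← integral_neg_eq_self]
    refine integral_congr_ae (.of_forall fun z ↦ ?_)
    simp only [W]
    rw [hQeven, ← hVeven]
    simp
  have hHanti : ∀ s t, |s| ≤ |t| → H t ≤ H s := fun s t hst ↦ by
    have := (hW.neg_log_integral_exp_neg hc hWlow).le_of_abs_le_of_even
      (fun t ↦ congrArg (fun x ↦ -log x) (hHeven t)) hst
    exact (log_le_log_iff (hHpos t) (hHpos s)).1 (neg_le_neg_iff.1 this)
  have hgW : Integrable (fun p : ℝ × (Fin m → ℝ) ↦ g p.1 * exp (-W p)) (volume.prod volume) := by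
    refine ((hg.mul_prod hQi).const_mul (exp (-V 0))).mono' ?_ (.of_forall fun p ↦ ?_)
    · exact Continuous.aestronglyMeasurable (by fun_prop)
    · rw [norm_of_nonneg (by positivity)]
      simp only [hgdef, W, ← exp_add, exp_le_exp]
      linarith [hVlow p]
  have hqgW : Integrable (fun p : ℝ × (Fin m → ℝ) ↦ |p.1| ^ q * (g p.1 * exp (-W p)))
      (volume.prod volume) := by
    refine ((hqg.mul_prod hQi).const_mul (exp (-V 0))).mono' ?_ (.of_forall fun p ↦ ?_)
    · refine AEStronglyMeasurable.mul (Measurable.aestronglyMeasurable (by fun_prop))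
        (Continuous.aestronglyMeasurable (by fun_prop))
    · rw [norm_of_nonneg (by positivity)]
      have : g p.1 * exp (-W p) ≤ exp (-V 0) * (g p.1 * exp (-Q p.2)) := by
        simp only [hgdef, W, ← exp_add, exp_le_exp]
        linarith [hVlow p]
      calc _ ≤ |p.1| ^ q * (exp (-V 0) * (g p.1 * exp (-Q p.2))) := by gcongr
        _ = _ := by ring
  have hgH : Integrable fun t ↦ g t * H t := by
    simpa only [integral_const_mul] using hgW.integral_prod_left
  have hqgH : Integrable fun t ↦ |t| ^ q * (g t * H t) := by
    simpa only [integral_const_mul] using hqgW.integral_prod_left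
  have e1 : ∀ p : ℝ × (Fin m → ℝ),
      exp (-(α * p.1 ^ 2 + Q p.2) - V p) = g p.1 * exp (-W p) := fun p ↦ by
    simp only [hgdef, W, ← exp_add]
    ring_nf
  have e2 : ∀ p : ℝ × (Fin m → ℝ),
      exp (-(α * p.1 ^ 2 + Q p.2)) = g p.1 * exp (-Q p.2) := fun p ↦ by
    simp only [hgdef, ← exp_add]
    ring_nf
  have hQpos : 0 < ∫ z, exp (-Q z) := integral_exp_pos hQi
  have hgHpos : 0 < ∫ t, g t * H t := by
    have h0 : ∀ t, g t * H t = exp (-(α * t ^ 2 - log (H t))) := fun t ↦ by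
      rw [neg_sub, sub_eq_add_neg, exp_add, exp_log (hHpos t), mul_comm]
      simp only [hgdef, neg_mul]
    simp only [h0] at hgH ⊢
    exact integral_exp_pos hgH
  simp only [e1, e2, ← mul_assoc]
  rw [Measure.volume_eq_prod,
    integral_prod_mul (fun t ↦ |t| ^ q * g t) (fun z ↦ exp (-Q z)),
    integral_prod_mul g (fun z ↦ exp (-Q z)),
    mul_div_mul_right _ _ hQpos.ne', integral_prod _ hgW]
  simp only [mul_assoc]
  rw [integral_prod _ hqgW]
  simp only [integral_const_mul]
  rw [div_le_div_iff₀ hgHpos hgpos]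
  exact integral_rpow_abs_mul_le hq (fun t ↦ (exp_pos _).le) hHanti hg hgpos hqg hgH hqgH

theorem Matrix.PosDef.convexOn_dotProduct_mulVec {n : ℕ} {A : Matrix (Fin n) (Fin n) ℝ}
    (hA : A.PosDef) : ConvexOn ℝ Set.univ fun x : Fin n → ℝ ↦ x ⬝ᵥ A *ᵥ x := by
  refine ⟨convex_univ, fun x _ y _ a b ha hb hab ↦ ?_⟩
  have h := hA.posSemidef.dotProduct_mulVec_nonneg (x - y)
  obtain rfl : b = 1 - a := by linarith
  simp only [star_trivial, mulVec_sub, mulVec_add, mulVec_smul, dotProduct_sub, sub_dotProduct,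
    dotProduct_add, add_dotProduct, dotProduct_smul, smul_dotProduct, smul_eq_mul] at h ⊢
  nlinarith [mul_nonneg (mul_nonneg ha hb) h]

/-- A continuous function, homogeneous of degree two and positive away from the origin, dominates
a multiple of the sum of squares. -/
theorem exists_mul_sum_sq_le {m : ℕ} {Q : (Fin m → ℝ) → ℝ} (hQ : Continuous Q)
    (hhom : ∀ (a : ℝ) z, Q (a • z) = a ^ 2 * Q z) (hpos : ∀ z, z ≠ 0 → 0 < Q z) :
    ∃ c > 0, ∀ z, c * ∑ i, z i ^ 2 ≤ Q z := by
  obtain ⟨c, hc, hcQ⟩ := (isCompact_sphere (0 : Fin m → ℝ) 1).exists_forall_le' hQ.continuousOn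
    (a := 0) fun z hz ↦ hpos z (ne_zero_of_mem_unit_sphere ⟨z, hz⟩)
  refine ⟨c / (m + 1), by positivity, fun z ↦ ?_⟩
  rcases eq_or_ne z 0 with rfl | hz
  · have := hhom 0 0
    simp at this
    simp [this]
  have hz' : 0 < ‖z‖ := norm_pos_iff.2 hz
  have h1 : c * ‖z‖ ^ 2 ≤ Q z := by
    have h2 := hcQ (‖z‖⁻¹ • z) (by simp [norm_smul, hz'.ne'])
    have h3 : Q z = ‖z‖ ^ 2 * Q (‖z‖⁻¹ • z) := by
      rw [← hhom, smul_inv_smul₀ hz'.ne']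
    rw [h3, mul_comm]
    gcongr
  have h4 : ∑ i, z i ^ 2 ≤ (m + 1) * ‖z‖ ^ 2 := by
    calc ∑ i, z i ^ 2 ≤ ∑ _i : Fin m, ‖z‖ ^ 2 := Finset.sum_le_sum fun i _ ↦
          sq_le_sq' (neg_le_of_abs_le (norm_le_pi_norm z i)) (le_of_abs_le (norm_le_pi_norm z i))
      _ = m * ‖z‖ ^ 2 := by simp
      _ ≤ _ := by gcongr; linarith
  calc c / (m + 1) * ∑ i, z i ^ 2 ≤ c / (m + 1) * ((m + 1) * ‖z‖ ^ 2) := by gcongr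
    _ = c * ‖z‖ ^ 2 := by field_simp
    _ ≤ Q z := h1

/-- Linear changes of variables rescale Lebesgue integrals by a constant. -/
theorem exists_integral_eq_mul_integral_comp {n m : ℕ} (e : (ℝ × (Fin m → ℝ)) ≃L[ℝ] (Fin n → ℝ)) :
    ∃ κ : ℝ, ∀ F : (Fin n → ℝ) → ℝ, ∫ φ, F φ = κ * ∫ p, F (e p) := by
  have : (Measure.map e volume).IsAddHaarMeasure := by
    rw [Measure.volume_eq_prod]
    exact e.isAddHaarMeasure_map _
  refine ⟨Measure.addHaarScalarFactor volume (Measure.map e volume), fun F ↦ ?_⟩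
  conv_lhs => rw [Measure.isAddLeftInvariant_eq_smul volume (Measure.map e volume)]
  have hemb : MeasurableEmbedding e := e.toHomeomorph.measurableEmbedding
  rw [integral_smul_nnreal_measure, hemb.integral_map]
  rfl

/-- Coordinates in which a nonzero functional is the first coordinate, orthogonal to the
remaining ones with respect to a given positive definite form. -/
theorem exists_equiv_dotProduct_mulVec {n : ℕ} {A : Matrix (Fin n) (Fin n) ℝ}
    (hAsymm : A.IsSymm) (hA : A.PosDef) {f : (Fin n → ℝ) →ₗ[ℝ] ℝ} (hf : f ≠ 0) :
    ∃ (m : ℕ) (e : (ℝ × (Fin m → ℝ)) ≃L[ℝ] (Fin n → ℝ)) (α : ℝ), 0 < α ∧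
      (∀ p, f (e p) = p.1) ∧
      ∀ p, e p ⬝ᵥ A *ᵥ e p = α * p.1 ^ 2 + e (0, p.2) ⬝ᵥ A *ᵥ e (0, p.2) := by
  set v : Fin n → ℝ := fun i ↦ f (Pi.single i 1) with hv
  have hfv : ∀ φ, f φ = φ ⬝ᵥ v := fun φ ↦ by
    rw [f.pi_apply_eq_sum_univ, dotProduct]
    refine Finset.sum_congr rfl fun i _ ↦ ?_
    rw [smul_eq_mul, hv]
    congr 2
    ext j
    simp [Pi.single_apply, eq_comm]
  set u := A⁻¹ *ᵥ v with hu
  have hAu : A *ᵥ u = v := by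
    rw [hu, mulVec_mulVec, mul_nonsing_inv _ ((isUnit_iff_isUnit_det A).1 hA.isUnit), one_mulVec]
  have hu0 : u ≠ 0 := by
    rintro h
    refine hf (LinearMap.ext fun φ ↦ ?_)
    rw [hfv, ← hAu, h]
    simp
  have hfu : 0 < f u := by
    rw [hfv, ← hAu]
    simpa using hA.dotProduct_mulVec_pos hu0
  set w := (f u)⁻¹ • u with hw
  have hfw : f w = 1 := by simp [hw, hfu.ne']
  have hAw : ∀ φ, φ ⬝ᵥ A *ᵥ w = (f u)⁻¹ * f φ := fun φ ↦ by
    rw [hw, mulVec_smul, dotProduct_smul, hAu, smul_eq_mul, hfv φ]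
  have hwA : ∀ φ, w ⬝ᵥ A *ᵥ φ = (f u)⁻¹ * f φ := fun φ ↦ by
    rw [← hAw, dotProduct_mulVec, ← mulVec_transpose, hAsymm.eq, dotProduct_comm]
  let b := Module.finBasis ℝ f.ker
  let L : (ℝ × (Fin (Module.finrank ℝ f.ker) → ℝ)) ≃ₗ[ℝ] (Fin n → ℝ) :=
    { toFun := fun p ↦ p.1 • w + (b.equivFun.symm p.2 : Fin n → ℝ)
      map_add' := fun p r ↦ by
        simp only [Prod.fst_add, Prod.snd_add, map_add, Submodule.coe_add, add_smul]
        abel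
      map_smul' := fun a p ↦ by
        simp [mul_smul]
      invFun := fun φ ↦ (f φ, b.equivFun ⟨φ - f φ • w, by simp [hfw]⟩)
      left_inv := fun p ↦ by
        have hker : f (b.equivFun.symm p.2 : Fin n → ℝ) = 0 := (b.equivFun.symm p.2).2
        have hfp : f (p.1 • w + (b.equivFun.symm p.2 : Fin n → ℝ)) = p.1 := by
          rw [map_add, map_smul, hfw, hker, smul_eq_mul, mul_one, add_zero]
        simp only [hfp, add_sub_cancel_left, Subtype.coe_eta, LinearEquiv.apply_symm_apply]
      right_inv := fun φ ↦ by simp }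
  have hL : ∀ p, L p = p.1 • w + (b.equivFun.symm p.2 : Fin n → ℝ) := fun _ ↦ rfl
  have hker : ∀ z, f (b.equivFun.symm z : Fin n → ℝ) = 0 := fun z ↦ (b.equivFun.symm z).2
  refine ⟨_, L.toContinuousLinearEquiv, (f u)⁻¹, inv_pos.2 hfu, fun p ↦ ?_, fun p ↦ ?_⟩
  · change f (L p) = _
    rw [hL, map_add, map_smul, hfw, hker]
    simp
  · change L p ⬝ᵥ A *ᵥ L p = _ + L (0, p.2) ⬝ᵥ A *ᵥ L (0, p.2)
    rw [hL, hL]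
    simp only [zero_smul, zero_add, mulVec_add, mulVec_smul, dotProduct_add, add_dotProduct,
      dotProduct_smul, smul_dotProduct, smul_eq_mul, hAw, hwA, map_add, map_smul, hfw, hker]
    ring

/-- **Brascamp–Lieb moment comparison** (Lemma 3.5, estimate (3.1)). For an even convex
potential `V` and a positive definite quadratic form `⟨φ, Aφ⟩`, the `q`-th moments of a linear
functional under the Gibbs measure `Z₁⁻¹ e^{-⟨φ,Aφ⟩ - V(φ)} dφ` are dominated by those under
the Gaussian measure `Z₂⁻¹ e^{-⟨φ,Aφ⟩} dφ`. -/
theorem brascamp_lieb_moment (n : ℕ) (hn : 1 ≤ n)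
    (V : (Fin n → ℝ) → ℝ) (hVeven : ∀ x, V (-x) = V x) (hVconvex : ConvexOn ℝ Set.univ V)
    (A : Matrix (Fin n) (Fin n) ℝ) (hAsymm : A.IsSymm) (hApos : A.PosDef)
    (f : (Fin n → ℝ) →ₗ[ℝ] ℝ) (q : ℝ) (hq : 1 ≤ q) :
    (∫ φ : Fin n → ℝ, |f φ| ^ q * Real.exp (-(φ ⬝ᵥ A.mulVec φ) - V φ)) /
        (∫ φ : Fin n → ℝ, Real.exp (-(φ ⬝ᵥ A.mulVec φ) - V φ)) ≤
      (∫ φ : Fin n → ℝ, |f φ| ^ q * Real.exp (-(φ ⬝ᵥ A.mulVec φ))) /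
        (∫ φ : Fin n → ℝ, Real.exp (-(φ ⬝ᵥ A.mulVec φ))) := by
  have hq0 : 0 < q := by linarith
  rcases eq_or_ne f 0 with rfl | hf
  · simp [zero_rpow hq0.ne']
  obtain ⟨m, e, α, hα, hfe, hAe⟩ := exists_equiv_dotProduct_mulVec hAsymm hApos hf
  obtain ⟨κ, hκ⟩ := exists_integral_eq_mul_integral_comp e
  let Q : (Fin m → ℝ) → ℝ := fun z ↦ e (0, z) ⬝ᵥ A *ᵥ e (0, z)
  have hQ : ConvexOn ℝ Set.univ Q := hApos.convexOn_dotProduct_mulVec.comp_linearMap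
    (e.toLinearMap ∘ₗ LinearMap.inr ℝ ℝ (Fin m → ℝ))
  have hQhom : ∀ (a : ℝ) z, Q (a • z) = a ^ 2 * Q z := fun a z ↦ by
    have : ((0, a • z) : ℝ × (Fin m → ℝ)) = a • (0, z) := by simp
    simp only [Q, this, map_smul, mulVec_smul, dotProduct_smul, smul_dotProduct, smul_eq_mul]
    ring
  have hQpos : ∀ z, z ≠ 0 → 0 < Q z := fun z hz ↦ by
    have : e (0, z) ≠ 0 := by simpa using hz
    simpa using hApos.dotProduct_mulVec_pos this
  obtain ⟨c, hc, hQc⟩ := exists_mul_sum_sq_le hQ.continuous_of_univ hQhom hQpos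
  have main := moment_comparison_prod hα hc hq0 hQ (fun z ↦ by simpa using hQhom (-1) z) hQc
    (V := fun p ↦ V (e p)) (hVconvex.comp_linearMap e.toLinearMap)
    (fun p ↦ by rw [map_neg, hVeven])
  rcases eq_or_ne κ 0 with h0 | h0
  · simp only [hκ, h0, zero_mul, div_zero, le_refl]
  · have hAQ : ∀ p, e p ⬝ᵥ A *ᵥ e p = α * p.1 ^ 2 + Q p.2 := hAe
    simp only [hκ, hfe, hAQ, mul_div_mul_left _ _ h0]
    exact main
end
end

section
/- Brascamp–Lieb exponential moment comparison (Lemma 3.5, estimate (3.2)). Let n ≥ 1, let V : ℝⁿ → ℝ be an even, convex function, and let A ∈ ℝ^{n×n} be a symmetric positive definite matrix. Define the probability measures μ and 𝒢 on ℝⁿ by dμ(φ) = Z₁^{-1} exp( -⟨φ, Aφ⟩ - V(φ) ) dφ and d𝒢(φ) = Z₂^{-1} exp( -⟨φ, Aφ⟩ ) dφ, where dφ is Lebesgue measure on ℝⁿ and Z₁, Z₂ are the normalization constants making μ and 𝒢 probability measures. Then for every linear function f : ℝⁿ → ℝ and every β > 0, one has ∫ exp( β |f(φ)|² ) dμ(φ)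 ≤ ∫ exp( β |f(φ)|² ) d𝒢(φ), where both sides are interpreted as Lebesgue integrals with values in [0,∞]. -/
open MeasureTheory Real Matrix ENNReal

noncomputable section

theorem LinearMap.BilinForm.continuous_apply_self {E : Type*} [NormedAddCommGroup E]
    [NormedSpace ℝ E] [FiniteDimensional ℝ E] (B : LinearMap.BilinForm ℝ E) :
    Continuous fun x => B x x := by
  have h : Continuous fun x => LinearMap.toContinuousLinearMap (B x) :=
    (LinearMap.toContinuousLinearMap.toLinearMap ∘ₗ B).continuous_of_finiteDimensional
  exact h.clm_apply continuous_id

theorem ConvexOn.add_comp_add_sub {E : Type*} [AddCommGroup E] [Module ℝ E] {V : E → ℝ}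
    (hV : ConvexOn ℝ Set.univ V) (a : E) :
    ConvexOn ℝ Set.univ fun b => V (a + b) + V (a - b) := by
  have h₁ : ConvexOn ℝ Set.univ fun b => V (a + b) := by
    simpa [Function.comp_def] using hV.translate_right a
  have h₂ : ConvexOn ℝ Set.univ fun b => V (a - b) := by
    simpa [Function.comp_def, sub_eq_add_neg] using
      h₁.comp_linearMap (-LinearMap.id : E →ₗ[ℝ] E)
  exact h₁.add h₂

theorem lintegral_ofReal_exp_ne_zero {α : Type*} [MeasurableSpace α] {μ : Measure α} [NeZero μ]
    {g : α → ℝ} (hg : Measurable g) : ∫⁻ x, ENNReal.ofReal (exp (g x)) ∂μ ≠ 0 := by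
  rw [Ne, lintegral_eq_zero_iff hg.exp.ennreal_ofReal]
  intro h
  obtain ⟨x, hx⟩ := h.exists
  exact (ENNReal.ofReal_pos.2 (exp_pos _)).ne' hx

theorem lintegral_exp_mul_sub_mul_sq {c : ℝ} (hc : 0 < c) (t : ℝ) :
    ∫⁻ s : ℝ, ENNReal.ofReal (exp (s * t - c * s ^ 2)) =
      ENNReal.ofReal (exp (t ^ 2 / (4 * c))) * ∫⁻ s : ℝ, ENNReal.ofReal (exp (-c * s ^ 2)) := by
  rw [← lintegral_const_mul' _ _ ENNReal.ofReal_ne_top,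
    ← lintegral_add_right_eq_self _ (t / (2 * c))]
  congr 1 with s
  rw [← ENNReal.ofReal_mul (exp_pos _).le, ← Real.exp_add]
  congr 2
  field_simp
  ring

section Haar

open Module

variable {E : Type*} [NormedAddCommGroup E] [NormedSpace ℝ E]
  [MeasurableSpace E] [BorelSpace E] {μ : Measure E} [μ.IsAddHaarMeasure]
  {V : E → ℝ} {B : LinearMap.BilinForm ℝ E}

theorem lintegral_exp_linear_tilt {f : E →ₗ[ℝ] ℝ} {u : E} (hf : ∀ x, f x = B x u + B u x)
    (V : E → ℝ) (s : ℝ) :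
    ∫⁻ x, ENNReal.ofReal (exp (s * f x) * exp (-B x x - V x)) ∂μ =
      ENNReal.ofReal (exp (s ^ 2 * B u u)) *
        ∫⁻ x, ENNReal.ofReal (exp (-V (x + s • u) - B x x)) ∂μ := by
  rw [← lintegral_const_mul' _ _ ENNReal.ofReal_ne_top,
    ← lintegral_add_right_eq_self _ (s • u)]
  congr 1 with x
  rw [← ENNReal.ofReal_mul (exp_pos _).le, ← Real.exp_add, ← Real.exp_add]
  congr 2
  simp only [hf, map_add, map_smul, LinearMap.add_apply, LinearMap.smul_apply, smul_eq_mul]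
  ring

variable [FiniteDimensional ℝ E]

variable (μ) in
theorem lintegral_eq_pow_finrank_mul_lintegral_comp_smul (F : E → ℝ≥0∞) {r : ℝ} (hr : 0 < r) :
    ∫⁻ x, F x ∂μ = ENNReal.ofReal (r ^ finrank ℝ E) * ∫⁻ x, F (r • x) ∂μ := by
  have h := lintegral_map_equiv (μ := μ) F (MeasurableEquiv.smul₀ r hr.ne')
  rw [MeasurableEquiv.coe_smul₀, Measure.map_addHaar_smul μ hr.ne', lintegral_smul_measure] at h
  rw [← h, smul_eq_mul, ← mul_assoc, ← ENNReal.ofReal_mul (by positivity),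
    abs_of_pos (by positivity), mul_inv_cancel₀ (by positivity), ENNReal.ofReal_one, one_mul]

variable (μ) in
/-- The change of variables `x = a + b`, `y = a - b`. -/
theorem lintegral_lintegral_eq_lintegral_add_sub (F : E → E → ℝ≥0∞)
    (hF : Measurable (Function.uncurry F)) :
    ∫⁻ x, ∫⁻ y, F x y ∂μ ∂μ =
      ENNReal.ofReal (2 ^ finrank ℝ E) * ∫⁻ a, ∫⁻ b, F (a + b) (a - b) ∂μ ∂μ := by
  have hy (x : E) : ∫⁻ y, F x y ∂μ =
      ENNReal.ofReal (2 ^ finrank ℝ E) * ∫⁻ b, F x (x - (2 : ℝ) • b) ∂μ := by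
    rw [← lintegral_sub_left_eq_self (F x) x,
      lintegral_eq_pow_finrank_mul_lintegral_comp_smul μ _ two_pos]
  have hmeas : Measurable (Function.uncurry fun x b : E => F x (x - (2 : ℝ) • b)) :=
    hF.comp (f := fun p : E × E => (p.1, p.1 - (2 : ℝ) • p.2)) (by fun_prop)
  have hmeas' : Measurable (Function.uncurry fun b a : E => F (a + b) (a - b)) :=
    hF.comp (f := fun p : E × E => (p.2 + p.1, p.2 - p.1)) (by fun_prop)
  simp_rw [hy]
  rw [lintegral_const_mul' _ _ ENNReal.ofReal_ne_top,
    lintegral_lintegral_swap hmeas.aemeasurable,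
    ← lintegral_lintegral_swap hmeas'.aemeasurable]
  congr 2 with b
  rw [← lintegral_add_right_eq_self _ b]
  congr 1 with a
  congr 1
  rw [two_smul]; abel

/-- Squaring a shifted Gaussian integral and rotating the coordinates expresses it through the
same shift of the even convex potentials `b ↦ V (a + b) + V (a - b)`. -/
theorem sq_lintegral_exp_shift (hVc : Continuous V) (hVeven : ∀ x, V (-x) = V x)
    (w : E) (r : ℝ) :
    (∫⁻ x, ENNReal.ofReal (exp (-V (x + w) - r * B x x)) ∂μ) ^ 2 =
      ENNReal.ofReal (2 ^ finrank ℝ E) * ∫⁻ a, ENNReal.ofReal (exp (-(2 * r) * B a a)) *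
        ∫⁻ b, ENNReal.ofReal
          (exp (-(V (a + (b + w)) + V (a - (b + w))) - 2 * r * B b b)) ∂μ ∂μ := by
  have hmeas (c : E) : Measurable fun x => ENNReal.ofReal (exp (-V (x + c) - r * B x x)) :=
    (continuous_exp.comp ((hVc.comp (continuous_add_const c)).neg.sub
      (B.continuous_apply_self.const_mul r))).measurable.ennreal_ofReal
  have hneg : ∫⁻ x, ENNReal.ofReal (exp (-V (x + w) - r * B x x)) ∂μ =
      ∫⁻ y, ENNReal.ofReal (exp (-V (y + -w) - r * B y y)) ∂μ := by
    rw [← lintegral_neg_eq_self]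
    congr 1 with y
    rw [show -y + w = -(y + -w) by abel, hVeven]
    simp
  rw [sq]
  nth_rw 2 [hneg]
  rw [← lintegral_lintegral_mul (hmeas w).aemeasurable (hmeas (-w)).aemeasurable,
    lintegral_lintegral_eq_lintegral_add_sub μ _
      (by exact ((hmeas w).comp measurable_fst).mul ((hmeas (-w)).comp measurable_snd))]
  congr 2 with a
  rw [← lintegral_const_mul' _ _ ENNReal.ofReal_ne_top]
  congr 1 with b
  rw [← ENNReal.ofReal_mul (exp_pos _).le, ← ENNReal.ofReal_mul (exp_pos _).le,
    ← Real.exp_add, ← Real.exp_add, add_assoc,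
    show a - b + -w = a - (b + w) by abel]
  congr 2
  simp only [map_add, map_sub, LinearMap.add_apply, LinearMap.sub_apply]
  ring

/-- A shift comparison whose constant grows only polynomially in the scale `r`, obtained by dilating
the integration variable. -/
theorem lintegral_exp_shift_le_mul (hVeven : ∀ x, V (-x) = V x) (hV : ConvexOn ℝ Set.univ V)
    (hBnonneg : ∀ x, 0 ≤ B x x) (w : E) {r : ℝ} (hr : 1 ≤ r) :
    ∫⁻ x, ENNReal.ofReal (exp (-V (x + w) - r * B x x)) ∂μ ≤
      ENNReal.ofReal (exp 1 * ((2 + B w w) * r) ^ finrank ℝ E) *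
        ∫⁻ x, ENNReal.ofReal (exp (-V x - r * B x x)) ∂μ := by
  have hw := hBnonneg w
  set t := (2 + B w w) * r - 1
  have ht : 0 < t := by nlinarith
  have hBt : r * B w w ≤ t := by nlinarith
  have h1t : (2 + B w w) * r = 1 + t := by ring
  have hscale (y : E) : V y ≤ V ((1 + t) • y) := by
    have hy : y ∈ segment ℝ (-((1 + t) • y)) ((1 + t) • y) := by
      refine ⟨t / (2 * (1 + t)), (2 + t) / (2 * (1 + t)), by positivity, by positivity,
        by field_simp; ring, ?_⟩
      rw [← smul_neg, smul_smul, smul_smul, smul_neg, ← neg_smul, ← add_smul]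
      convert! one_smul ℝ y
      field_simp
      ring
    simpa [hVeven] using hV.le_on_segment (Set.mem_univ _) (Set.mem_univ _) hy
  have hquad (y : E) : B y y - B w w / t ≤ B ((1 + t) • y - w) ((1 + t) • y - w) := by
    have h : 0 ≤ (1 + t) / t * B (t • y - w) (t • y - w) + t * B y y :=
      add_nonneg (mul_nonneg (by positivity) (hBnonneg _)) (mul_nonneg ht.le (hBnonneg y))
    have key : B ((1 + t) • y - w) ((1 + t) • y - w) =
        (1 + t) / t * B (t • y - w) (t • y - w) + (1 + t) * B y y - B w w / t := by
      simp only [map_sub, map_smul, LinearMap.sub_apply, LinearMap.smul_apply, smul_eq_mul]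
      field_simp
      ring
    linarith
  rw [← lintegral_sub_right_eq_self _ w,
    lintegral_eq_pow_finrank_mul_lintegral_comp_smul μ _ (show 0 < 1 + t by positivity), h1t,
    mul_comm (exp 1), ENNReal.ofReal_mul (by positivity), mul_assoc]
  gcongr
  rw [← lintegral_const_mul' _ _ ENNReal.ofReal_ne_top]
  refine lintegral_mono fun y => ?_
  rw [← ENNReal.ofReal_mul (exp_pos _).le, ← Real.exp_add, sub_add_cancel]
  gcongr
  have h : r * (B y y - B w w / t) ≤ r * B ((1 + t) • y - w) ((1 + t) • y - w) := by
    gcongr; exact hquad y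
  have h' : r * (B w w / t) ≤ 1 := by
    rw [← mul_div_assoc, div_le_one ht]; exact hBt
  linarith [hscale y]

/-- A comparison for all even convex potentials with the quadratic form scaled by `2 ^ k` improves
to its `2 ^ k`-th root without the scaling. -/
theorem lintegral_exp_shift_le_mul_of_pow (w : E) (k : ℕ) {r : ℝ} {D : ℝ≥0∞} (hDtop : D ≠ ∞)
    (hD : ∀ W : E → ℝ, (∀ x, W (-x) = W x) → ConvexOn ℝ Set.univ W →
      ∫⁻ x, ENNReal.ofReal (exp (-W (x + w) - 2 ^ k * r * B x x)) ∂μ ≤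
        D ^ 2 ^ k * ∫⁻ x, ENNReal.ofReal (exp (-W x - 2 ^ k * r * B x x)) ∂μ)
    (hVeven : ∀ x, V (-x) = V x) (hV : ConvexOn ℝ Set.univ V) :
    ∫⁻ x, ENNReal.ofReal (exp (-V (x + w) - r * B x x)) ∂μ ≤
      D * ∫⁻ x, ENNReal.ofReal (exp (-V x - r * B x x)) ∂μ := by
  induction k generalizing r D V with
  | zero => simpa using hD V hVeven hV
  | succ k ih =>
    have hstep (a : E) := ih (r := 2 * r) (D := D ^ 2)
      (V := fun b => V (a + b) + V (a - b))
      (ENNReal.pow_ne_top hDtop)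
      (fun W hWeven hW => by
        rw [← pow_mul, ← pow_succ', ← mul_assoc, ← pow_succ]
        exact hD W hWeven hW)
      (fun b => by rw [sub_neg_eq_add, ← sub_eq_add_neg, add_comm]) (hV.add_comp_add_sub a)
    have hVc : Continuous V := hV.locallyLipschitz.continuous
    have h₀ := sq_lintegral_exp_shift (μ := μ) (B := B) hVc hVeven 0 r
    simp only [add_zero] at h₀
    rw [← ENNReal.pow_le_pow_left_iff two_ne_zero, mul_pow, h₀,
      sq_lintegral_exp_shift hVc hVeven, mul_left_comm]
    gcongr
    rw [← lintegral_const_mul' _ _ (ENNReal.pow_ne_top hDtop)]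
    refine lintegral_mono fun a => ?_
    rw [mul_left_comm]
    gcongr
    exact hstep a

/-- **Anderson's inequality** for Gaussian weights. -/
theorem lintegral_exp_shift_le (hVeven : ∀ x, V (-x) = V x) (hV : ConvexOn ℝ Set.univ V)
    (hBnonneg : ∀ x, 0 ≤ B x x) (w : E) :
    ∫⁻ x, ENNReal.ofReal (exp (-V (x + w) - B x x)) ∂μ ≤
      ∫⁻ x, ENNReal.ofReal (exp (-V x - B x x)) ∂μ := by
  set J := ∫⁻ x, ENNReal.ofReal (exp (-V x - B x x)) ∂μ
  by_cases hJtop : J = ∞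
  · simp [hJtop]
  have hx (x : ℝ) (hx : 1 < x) :
      ∫⁻ x, ENNReal.ofReal (exp (-V (x + w) - B x x)) ∂μ ≤ ENNReal.ofReal x * J := by
    obtain ⟨k, hk⟩ : ∃ k : ℕ,
        exp 1 * ((2 + B w w) * 2 ^ k) ^ finrank ℝ E ≤ x ^ 2 ^ k := by
      have hlim := (((tendsto_pow_const_div_const_pow_of_one_lt (finrank ℝ E) hx).comp
        (tendsto_pow_atTop_atTop_of_one_lt one_lt_two)).const_mul
          (exp 1 * (2 + B w w) ^ finrank ℝ E))
      rw [mul_zero] at hlim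
      obtain ⟨k, hk⟩ := (hlim.eventually_le_const one_pos).exists
      refine ⟨k, ?_⟩
      simp only [Function.comp_apply, Nat.cast_pow, Nat.cast_ofNat] at hk
      rwa [← mul_div_assoc, div_le_one (by positivity), mul_assoc, ← mul_pow] at hk
    have h := lintegral_exp_shift_le_mul_of_pow (μ := μ) (B := B) (r := 1)
      (D := ENNReal.ofReal x) w k
      ENNReal.ofReal_ne_top
      (fun W hWeven hW => by
        rw [← ENNReal.ofReal_pow (by positivity), mul_one]
        exact (lintegral_exp_shift_le_mul hWeven hW hBnonneg w (one_le_pow₀ one_le_two)).trans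
          (by gcongr)) hVeven hV
    simpa only [one_mul] using h
  have hlim : Filter.Tendsto (fun x : ℝ => ENNReal.ofReal x * J) (nhdsWithin 1 (Set.Ioi 1))
      (nhds (ENNReal.ofReal 1 * J)) :=
    ENNReal.Tendsto.mul_const
      ((ENNReal.continuous_ofReal.tendsto 1).mono_left nhdsWithin_le_nhds) (Or.inr hJtop)
  simpa using ge_of_tendsto hlim (Filter.eventually_of_mem self_mem_nhdsWithin hx)

theorem lintegral_exp_sq_mul_eq {f : E →ₗ[ℝ] ℝ} {u : E} (hf : ∀ x, f x = B x u + B u x)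
    (hVc : Continuous V) {c : ℝ} (hc : 0 < c) :
    (∫⁻ s : ℝ, ENNReal.ofReal (exp (-c * s ^ 2))) *
        ∫⁻ x, ENNReal.ofReal (exp (f x ^ 2 / (4 * c)) * exp (-B x x - V x)) ∂μ =
      ∫⁻ s : ℝ, ENNReal.ofReal (exp (s ^ 2 * B u u - c * s ^ 2)) *
        ∫⁻ x, ENNReal.ofReal (exp (-V (x + s • u) - B x x)) ∂μ := by
  have hBc := B.continuous_apply_self
  have hfc : Continuous f := f.continuous_of_finiteDimensional
  have hmeas : Measurable (Function.uncurry fun (x : E) (s : ℝ) =>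
      ENNReal.ofReal (exp (s * f x - c * s ^ 2)) * ENNReal.ofReal (exp (-B x x - V x))) := by
    have h : Measurable fun x => -B x x - V x := (hBc.neg.sub hVc).measurable
    have h' : Measurable fun p : E × ℝ => ENNReal.ofReal (exp (p.2 * f p.1 - c * p.2 ^ 2)) := by
      fun_prop
    exact h'.mul (h.comp measurable_fst).exp.ennreal_ofReal
  have hmeas' : Measurable fun x =>
      ENNReal.ofReal (exp (f x ^ 2 / (4 * c)) * exp (-B x x - V x)) :=
    (((by fun_prop : Continuous fun x => exp (f x ^ 2 / (4 * c))).mul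
      (continuous_exp.comp (hBc.neg.sub hVc))).measurable).ennreal_ofReal
  rw [← lintegral_const_mul _ hmeas']
  calc _ = ∫⁻ x, ∫⁻ s : ℝ, ENNReal.ofReal (exp (s * f x - c * s ^ 2)) *
        ENNReal.ofReal (exp (-B x x - V x)) ∂volume ∂μ := by
        congr 1 with x
        rw [lintegral_mul_const' _ _ ENNReal.ofReal_ne_top, lintegral_exp_mul_sub_mul_sq hc,
          ENNReal.ofReal_mul (exp_pos _).le]
        ring
    _ = _ := by
        rw [lintegral_lintegral_swap hmeas.aemeasurable]
        congr 1 with s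
        rw [sub_eq_neg_add, Real.exp_add, ENNReal.ofReal_mul (exp_pos _).le, mul_assoc,
          ← lintegral_exp_linear_tilt hf, ← lintegral_const_mul' _ _ ENNReal.ofReal_ne_top]
        congr 1 with x
        rw [sub_eq_neg_add, Real.exp_add, ENNReal.ofReal_mul (exp_pos _).le,
          ENNReal.ofReal_mul (exp_pos _).le, mul_assoc]

/-- Comparison of exponential moments for a bilinear form on a finite-dimensional space, with the
linear functional represented by a vector. -/
theorem lintegral_exp_sq_div_le (hVeven : ∀ x, V (-x) = V x) (hV : ConvexOn ℝ Set.univ V)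
    (hBnonneg : ∀ x, 0 ≤ B x x) (hBfin : ∫⁻ x, ENNReal.ofReal (exp (-B x x)) ∂μ ≠ ∞)
    {f : E →ₗ[ℝ] ℝ} {u : E} (hf : ∀ x, f x = B x u + B u x) {β : ℝ} (hβ : 0 < β) :
    (∫⁻ x, ENNReal.ofReal (exp (β * f x ^ 2) * exp (-B x x - V x)) ∂μ) /
        (∫⁻ x, ENNReal.ofReal (exp (-B x x - V x)) ∂μ) ≤
      (∫⁻ x, ENNReal.ofReal (exp (β * f x ^ 2) * exp (-B x x)) ∂μ) /
        (∫⁻ x, ENNReal.ofReal (exp (-B x x)) ∂μ) := by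
  set c := 1 / (4 * β) with hc_def
  have hc : 0 < c := by positivity
  have hβc (t : ℝ) : β * t = t / (4 * c) := by rw [hc_def]; field_simp
  simp_rw [hβc]
  set κ := ∫⁻ s : ℝ, ENNReal.ofReal (exp (-c * s ^ 2)) with hκ
  set K := ∫⁻ s : ℝ, ENNReal.ofReal (exp (s ^ 2 * B u u - c * s ^ 2)) with hK
  have hκtop : κ ≠ ∞ := (integrable_exp_neg_mul_sq hc).lintegral_lt_top.ne
  have hκ0 : κ ≠ 0 := lintegral_ofReal_exp_ne_zero (by fun_prop)
  have hZ0 : ∫⁻ x, ENNReal.ofReal (exp (-B x x)) ∂μ ≠ 0 :=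
    lintegral_ofReal_exp_ne_zero B.continuous_apply_self.neg.measurable
  have hnum : κ * ∫⁻ x, ENNReal.ofReal (exp (f x ^ 2 / (4 * c)) * exp (-B x x - V x)) ∂μ ≤
      K * ∫⁻ x, ENNReal.ofReal (exp (-B x x - V x)) ∂μ := by
    rw [lintegral_exp_sq_mul_eq hf hV.locallyLipschitz.continuous hc, hK,
      ← lintegral_mul_const _ (by fun_prop)]
    refine lintegral_mono fun s => ?_
    refine mul_le_mul_right ((lintegral_exp_shift_le hVeven hV hBnonneg _).trans_eq ?_) _
    simp only [sub_eq_add_neg, add_comm]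
  have hden : κ * ∫⁻ x, ENNReal.ofReal (exp (f x ^ 2 / (4 * c)) * exp (-B x x)) ∂μ =
      K * ∫⁻ x, ENNReal.ofReal (exp (-B x x)) ∂μ := by
    have h := lintegral_exp_sq_mul_eq (μ := μ) hf (continuous_const (y := (0 : ℝ))) hc
    simp only [sub_zero, neg_zero, zero_sub] at h
    rw [h, lintegral_mul_const _ (by fun_prop)]
  have hK' : (∫⁻ x, ENNReal.ofReal (exp (f x ^ 2 / (4 * c)) * exp (-B x x)) ∂μ) /
      (∫⁻ x, ENNReal.ofReal (exp (-B x x)) ∂μ) = K / κ := by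
    rw [ENNReal.div_eq_div_iff hκ0 hκtop hZ0 hBfin, hden, mul_comm]
  rw [hK']
  refine ENNReal.div_le_of_le_mul ?_
  rw [← ENNReal.mul_le_mul_iff_right hκ0 hκtop]
  refine hnum.trans_eq ?_
  rw [← mul_assoc, ENNReal.mul_div_cancel hκ0 hκtop]

end Haar

theorem Matrix.PosDef.exists_pos_mul_sq_norm_le {n : ℕ} {A : Matrix (Fin n) (Fin n) ℝ}
    (hA : A.PosDef) : ∃ c > 0, ∀ x : Fin n → ℝ, c * ‖x‖ ^ 2 ≤ x ⬝ᵥ A *ᵥ x := by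
  have hpos (x : Fin n → ℝ) (hx : x ≠ 0) : 0 < x ⬝ᵥ A *ᵥ x := by
    simpa using hA.dotProduct_mulVec_pos hx
  have hcont : Continuous fun x : Fin n → ℝ => x ⬝ᵥ A *ᵥ x := by fun_prop
  obtain ⟨c, hc, hcle⟩ : ∃ c > 0, ∀ x ∈ Metric.sphere (0 : Fin n → ℝ) 1, c ≤ x ⬝ᵥ A *ᵥ x :=
    (isCompact_sphere _ _).exists_forall_le' hcont.continuousOn
      fun x hx => hpos x (ne_zero_of_mem_unit_sphere ⟨x, hx⟩)
  refine ⟨c, hc, fun x => ?_⟩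
  rcases eq_or_ne x 0 with rfl | hx
  · simp
  have hx' : 0 < ‖x‖ := norm_pos_iff.2 hx
  have h := hcle (‖x‖⁻¹ • x) (by simp [norm_smul, hx'.ne'])
  simp only [mulVec_smul, dotProduct_smul, smul_dotProduct, smul_eq_mul] at h
  field_simp at h
  linarith

theorem Matrix.PosDef.lintegral_exp_neg_ne_top {n : ℕ} {A : Matrix (Fin n) (Fin n) ℝ}
    (hA : A.PosDef) : ∫⁻ x : Fin n → ℝ, ENNReal.ofReal (exp (-(x ⬝ᵥ A *ᵥ x))) ≠ ∞ := by
  obtain ⟨c, hc, hle⟩ := hA.exists_pos_mul_sq_norm_le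
  have hint : Integrable fun x : Fin n → ℝ => ∏ i, exp (-(c / (n + 1)) * x i ^ 2) :=
    Integrable.fintype_prod fun i => integrable_exp_neg_mul_sq (by positivity)
  refine ne_top_of_le_ne_top hint.lintegral_lt_top.ne (lintegral_mono fun x => ?_)
  rw [← Real.exp_sum]
  gcongr
  rw [← Finset.mul_sum]
  have hsum : ∑ i, x i ^ 2 ≤ (n + 1) * ‖x‖ ^ 2 := by
    calc ∑ i, x i ^ 2 ≤ ∑ _i : Fin n, ‖x‖ ^ 2 := by
          refine Finset.sum_le_sum fun i _ => sq_le_sq.2 ?_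
          simpa using norm_le_pi_norm x i
      _ ≤ _ := by simp; nlinarith [sq_nonneg ‖x‖]
  have h : c / (n + 1) * ∑ i, x i ^ 2 ≤ c * ‖x‖ ^ 2 := by
    calc _ ≤ c / (n + 1) * ((n + 1) * ‖x‖ ^ 2) := by gcongr
      _ = _ := by field_simp
  linarith [hle x]

theorem Matrix.PosDef.exists_linearMap_eq_dotProduct {n : ℕ} {A : Matrix (Fin n) (Fin n) ℝ}
    (hA : A.PosDef) (hAsymm : A.IsSymm) (f : (Fin n → ℝ) →ₗ[ℝ] ℝ) :
    ∃ u, ∀ x, f x = x ⬝ᵥ A *ᵥ u + u ⬝ᵥ A *ᵥ x := by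
  obtain ⟨v, hv⟩ : ∃ v : Fin n → ℝ, ∀ x, f x = x ⬝ᵥ v :=
    ⟨fun i => f (Pi.single i 1), fun x => by
      conv_lhs => rw [pi_eq_sum_univ' x]
      simp [dotProduct]⟩
  have hdet : IsUnit A.det := hA.det_pos.ne'.isUnit
  have hAu : A *ᵥ ((1 / 2 : ℝ) • A⁻¹ *ᵥ v) = (1 / 2 : ℝ) • v := by
    rw [mulVec_smul, mulVec_mulVec, mul_nonsing_inv _ hdet, one_mulVec]
  refine ⟨(1 / 2 : ℝ) • A⁻¹ *ᵥ v, fun x => ?_⟩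
  rw [dotProduct_mulVec _ A x, ← mulVec_transpose, hAsymm.eq, hAu, dotProduct_comm _ x, hv]
  simp only [dotProduct_smul, smul_eq_mul]
  ring

/-- **Brascamp–Lieb exponential moment comparison** (Lemma 3.5, estimate (3.2)). For an even
convex potential `V` and a positive definite quadratic form `⟨φ, Aφ⟩`, the exponential moments
`∫ exp(β |f(φ)|²) dμ` of a linear functional under the Gibbs measure
`Z₁⁻¹ e^{-⟨φ,Aφ⟩ - V(φ)} dφ` are dominated by those under the Gaussian measure
`Z₂⁻¹ e^{-⟨φ,Aφ⟩} dφ`; both sides are Lebesgue integrals valued in `[0,∞]`. -/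
theorem brascamp_lieb_exponential (n : ℕ) (hn : 1 ≤ n)
    (V : (Fin n → ℝ) → ℝ) (hVeven : ∀ x, V (-x) = V x) (hVconvex : ConvexOn ℝ Set.univ V)
    (A : Matrix (Fin n) (Fin n) ℝ) (hAsymm : A.IsSymm) (hApos : A.PosDef)
    (f : (Fin n → ℝ) →ₗ[ℝ] ℝ) (β : ℝ) (hβ : 0 < β) :
    (∫⁻ φ : Fin n → ℝ,
        ENNReal.ofReal (Real.exp (β * f φ ^ 2) * Real.exp (-(φ ⬝ᵥ A.mulVec φ) - V φ))) /
        (∫⁻ φ : Fin n → ℝ, ENNReal.ofReal (Real.exp (-(φ ⬝ᵥ A.mulVec φ) - V φ))) ≤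
      (∫⁻ φ : Fin n → ℝ,
          ENNReal.ofReal (Real.exp (β * f φ ^ 2) * Real.exp (-(φ ⬝ᵥ A.mulVec φ)))) /
        (∫⁻ φ : Fin n → ℝ, ENNReal.ofReal (Real.exp (-(φ ⬝ᵥ A.mulVec φ)))) := by
  obtain ⟨u, hu⟩ := hApos.exists_linearMap_eq_dotProduct hAsymm f
  have hB (x y : Fin n → ℝ) : Matrix.toBilin' A x y = x ⬝ᵥ A.mulVec y :=
    Matrix.toBilin'_apply' A x y
  have h := lintegral_exp_sq_div_le (μ := volume) (B := Matrix.toBilin' A) hVeven hVconvex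
    (fun x => by simpa [hB] using hApos.posSemidef.dotProduct_mulVec_nonneg x)
    (by simpa only [hB] using hApos.lintegral_exp_neg_ne_top)
    (by simpa only [hB] using hu) hβ
  simpa only [hB] using h
end
end
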